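/- Let p ≥ 1 be an integer, let v be a finite binary word whose last letter (if v is nonempty) is not 0 and such that 0100 is not a contiguous subword of v · 0^p, and let v' be any finite binary word. Then |P(v · 1 · 0^{p+2} · v')| ≤ |P(v · 0^p 100 · v')|, where 0^k denotes a block of k zeroes and · denotes concatenation. -/

import Mathlib

/-!
Read `Pcount w` as the number of suffixes of `w` that begin with one of the three patterns.
Both words then split into contributions from `v` and from the remaining tail.

The tails `1 0^(p+2) v'` and `0^p 1 0 0 v'` contribute equally: in each, the letter `1`
contributes nothing and each of the `p` zeroes starts a pattern (in the second word the last of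
them starts `0100`), leaving the common suffix `0 0 v'` (`Pcount_zeros_zeros`,
`Pcount_zeros_one_zeros`).

An occurrence starting inside `v` in the first word cannot run past `v`: as `v` ends in `1` and is
followed by `1`, it would contain `11`, which is a factor of no pattern. It thus lies inside `v`
and also occurs in the second word (`Pcount_append_true_le`).
-/

open Filter

/-- `patternAt w i` means the 1-based index `i ≥ 2` in the finite binary word `w`
(`false` = 0, `true` = 1) is a member of the set `P(w)`: one of the patterns
`00`, `0100`, `01010` occurs starting at position `i-1` (1-based) and fits in `w`. -/
def patternAt (w : List Bool) (i : ℕ) : Prop :=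
  2 ≤ i ∧
    ([false, false] <+: w.drop (i - 2) ∨
     [false, true, false, false] <+: w.drop (i - 2) ∨
     [false, true, false, true, false] <+: w.drop (i - 2))

instance (w : List Bool) : DecidablePred (patternAt w) := fun i => by
  unfold patternAt; infer_instance

/-- The set `P(w)` of indices, as a `Finset`. -/
def Pset (w : List Bool) : Finset ℕ :=
  (Finset.range (w.length + 1)).filter (patternAt w)

/-- `|P(w)|`. -/
def Pcount (w : List Bool) : ℕ := (Pset w).card

/-- `|Z(w)|`: the number of zeroes in `w`. -/
def Zcount (w : List Bool) : ℕ := w.count false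

/-- The initial subword `w^(n)` of an infinite binary word `w = w_1 w_2 w_3 ⋯`
(indexed so that `w k` is the letter `w_{k+1}`). -/
def prefixWord (w : ℕ → Bool) (n : ℕ) : List Bool := List.ofFn (fun k : Fin n => w k)

noncomputable def rinf (w : ℕ → Bool) : ℝ :=
  liminf (fun n : ℕ => (Zcount (prefixWord w n) : ℝ) / n) atTop

noncomputable def rsup (w : ℕ → Bool) : ℝ :=
  limsup (fun n : ℕ => (Zcount (prefixWord w n) : ℝ) / n) atTop

noncomputable def Rinf (w : ℕ → Bool) : ℝ :=
  liminf (fun n : ℕ => (Pcount (prefixWord w n) : ℝ) / n) atTop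

noncomputable def Rsup (w : ℕ → Bool) : ℝ :=
  limsup (fun n : ℕ => (Pcount (prefixWord w n) : ℝ) / n) atTop

/-- The word `w` begins with one of the patterns `00`, `0100`, `01010`. -/
def patternHead (w : List Bool) : Prop :=
  [false, false] <+: w ∨ [false, true, false, false] <+: w ∨
    [false, true, false, true, false] <+: w

instance : DecidablePred patternHead := fun w => by
  unfold patternHead; infer_instance

lemma Pcount_eq_count (w : List Bool) :
    Pcount w = Nat.count (fun k => patternHead (w.drop k)) w.length := by
  -- The index `w.length + 1` is added for free: a single letter begins with no pattern.
  have hlast : ¬ patternAt w (w.length + 1) := by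
    rintro ⟨h2, h⟩
    rcases h with h | h | h <;>
    · have := h.length_le
      simp only [List.length_drop, List.length_cons, List.length_nil] at this
      omega
  have h1 : Pcount w = Nat.count (patternAt w) (2 + w.length) := by
    rw [show 2 + w.length = (w.length + 1) + 1 by omega, Nat.count_succ, if_neg hlast,
      Nat.count_eq_card_filter_range]
    rfl
  have h2 : Nat.count (patternAt w) 2 = 0 := by
    simp [Nat.count_succ, patternAt]
  rw [h1, Nat.count_add, h2, zero_add]
  congr 1
  funext k
  simp [patternAt, patternHead]

lemma Pcount_cons (a : Bool) (w : List Bool) :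
    Pcount (a :: w) = Pcount w + if patternHead (a :: w) then 1 else 0 := by
  simp only [Pcount_eq_count, List.length_cons, Nat.count_succ', List.drop_succ_cons,
    List.drop_zero]

lemma Pcount_zeros_zeros (p : ℕ) (u : List Bool) :
    Pcount (List.replicate p false ++ false :: false :: u) = p + Pcount (false :: false :: u) := by
  induction p with
  | zero => simp
  | succ p ih =>
    rw [List.replicate_succ, List.cons_append, Pcount_cons, ih, if_pos]
    · omega
    · cases p <;> simp [patternHead, List.replicate_succ]

lemma Pcount_zeros_one_zeros (p : ℕ) (u : List Bool) :
    Pcount (List.replicate p false ++ true :: false :: false :: u) =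
      p + Pcount (false :: false :: u) := by
  induction p with
  | zero => simp [Pcount_cons true, patternHead]
  | succ p ih =>
    rw [List.replicate_succ, List.cons_append, Pcount_cons, ih, if_pos]
    · omega
    · cases p <;> simp [patternHead, List.replicate_succ]

/-- A pattern at the start of `v · 1 · x`, where `v` is nonempty and ends in `1`, lies inside `v`,
since no pattern contains `11`. -/
lemma patternHead_of_append_true {v : List Bool} (x : List Bool) (hv : v.getLast? = some true)
    (h : patternHead (v ++ true :: x)) : patternHead v := by
  rcases v with _ | ⟨a, _ | ⟨b, _ | ⟨c, _ | ⟨d, _ | ⟨e, v⟩⟩⟩⟩⟩ <;>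
    simp_all [patternHead]

lemma patternHead.append {v : List Bool} (h : patternHead v) (y : List Bool) :
    patternHead (v ++ y) := by
  have hp := List.prefix_append v y
  exact h.imp (·.trans hp) (Or.imp (·.trans hp) (·.trans hp))

/-- If `v` does not end in `0`, then among all continuations of `v`, those starting with `1` have
the fewest patterns starting inside `v`. -/
lemma Pcount_append_true_le (v x y : List Bool) (hv : v.getLast? ≠ some false) :
    Pcount (v ++ true :: x) + Pcount y ≤ Pcount (v ++ y) + Pcount (true :: x) := by
  induction v with
  | nil => simp [add_comm]
  | cons a v ih =>
    have ih := ih (by cases v <;> simp_all)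
    have hhead : patternHead (a :: (v ++ true :: x)) → patternHead (a :: (v ++ y)) := fun h => by
      have hlast : (a :: v).getLast? = some true := by
        rw [List.getLast?_eq_some_getLast (List.cons_ne_nil a v)] at hv ⊢
        simpa using hv
      exact (patternHead_of_append_true (v := a :: v) x hlast h).append y
    simp only [List.cons_append, Pcount_cons a]
    split_ifs <;> first | omega | tauto

theorem stmt_17 (p : ℕ) (hp : 1 ≤ p) (v v' : List Bool)
    (hlast : v.getLast? ≠ some false)
    (h0100 : ¬ ([false, true, false, false] <:+: (v ++ List.replicate p false))) :
    Pcount (v ++ [true] ++ List.replicate (p + 2) false ++ v') ≤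
      Pcount (v ++ List.replicate p false ++ [true, false, false] ++ v') := by
  have hR : v ++ List.replicate p false ++ [true, false, false] ++ v' =
      v ++ (List.replicate p false ++ true :: false :: false :: v') := by simp
  have hL : v ++ [true] ++ List.replicate (p + 2) false ++ v' =
      v ++ true :: (List.replicate p false ++ false :: false :: v') := by
    simp [List.replicate_succ', List.append_assoc]
  rw [hL, hR]
  have h := Pcount_append_true_le v (List.replicate p false ++ false :: false :: v')
    (List.replicate p false ++ true :: false :: false :: v') hlast
  have h1 : Pcount (true :: (List.replicate p false ++ false :: false :: v')) =
      p + Pcount (false :: false :: v') := by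
    rw [Pcount_cons, Pcount_zeros_zeros, if_neg (by simp [patternHead])]
    omega
  rw [h1, Pcount_zeros_one_zeros] at h
  omega
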